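/- If n balls are thrown independently and uniformly at random into n bins, then with high probability the maximum load is Θ(log n / log log n); in particular the expected maximum load is at least k_0 · log n / log log n for some constant k_0 > 0 and all large n. -/

import Mathlib

/-!
Write `L = log n / log log n`; the maximum load lies in `[L/4, 4L]` with high probability.

Upper tail (`upper_tail`): for a fixed bin, `E[z ^ load] = (1 + (z - 1)/n)^n ≤ e^z`, so Markov's
inequality and a union bound over bins give `P(maxLoad > z) ≤ n e^z / z^z`. At `z = 4L` this is
at most `1/n`.

Lower tail (`lower_tail`): no second moment is needed. The number of outcomes with loads `l` is at
most `n! / ∏ (l v)!` (`card_load_eq_mul_le`, by letting the permutations of the balls act), and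
summing over all `l` with entries below `k` factorizes, so
`P(maxLoad < k) ≤ n! / n^n · (∑ j < k, 1/j!)^n`. This is the comparison with independent Poisson
loads: by Stirling it is at most `e √n (1 - 1/(e k!))^n`, which tends to `0` when `k! ≤ √n`, and
`k = ⌈L/4⌉` satisfies that condition.

The expectation bound follows by Markov's inequality from the lower bound on the maximum load.
-/

/-- The load of bin `v` under outcome `ω` (each of `n` balls lands in a bin). -/
def load {n : ℕ} (ω : Fin n → Fin n) (v : Fin n) : ℕ :=
  (Finset.univ.filter fun b => ω b = v).card

/-- The maximum bin load. -/
def maxLoad {n : ℕ} (ω : Fin n → Fin n) : ℕ :=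
  Finset.univ.sup (load ω)

/-! ### Lower tail by Poissonization -/

open Finset in
/-- At most `n! / ∏ v, (l v)!` outcomes have the prescribed loads `l`: permuting the balls acts
transitively on these outcomes, and the stabilizer of each has `∏ v, (l v)!` elements. -/
lemma card_load_eq_mul_le {n : ℕ} (l : Fin n → ℕ) :
    (univ.filter fun ω : Fin n → Fin n => load ω = l).card * ∏ v, (l v).factorial
      ≤ n.factorial := by
  classical
  rcases (univ.filter fun ω : Fin n → Fin n => load ω = l).eq_empty_or_nonempty with h | ⟨ω₀, h₀⟩
  · simp [h]
  have h₀' : load ω₀ = l := (mem_filter.1 h₀).2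
  have key : ∀ ω ∈ univ.filter (fun ω : Fin n → Fin n => load ω = l),
      ∏ v, (l v).factorial ≤ ((univ.filter fun σ : Equiv.Perm (Fin n) =>
        ω₀ ∘ σ ∈ univ.filter (fun ω : Fin n → Fin n => load ω = l)).filter
          fun σ : Equiv.Perm (Fin n) => ω₀ ∘ σ = ω).card := by
    intro ω hω
    have hω' : load ω = l := (mem_filter.1 hω).2
    have hcard : ∀ v, Fintype.card {a // ω a = v} = l v := fun v => by
      rw [Fintype.card_subtype, ← hω', load]
    have hcard₀ : ∀ v, Fintype.card {a // ω₀ a = v} = l v := fun v => by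
      rw [← h₀', Fintype.card_subtype, load]
    -- Equal loads give a permutation carrying `ω₀` to `ω`.
    let σ₀ : Equiv.Perm (Fin n) := Equiv.ofFiberEquiv (f := ω) (g := ω₀)
      fun v => Fintype.equivOfCardEq ((hcard v).trans (hcard₀ v).symm)
    have hσ₀ : ∀ a, ω₀ (σ₀ a) = ω a := Equiv.ofFiberEquiv_map _
    have hstab := DomMulAct.stabilizer_card ω
    simp only [hcard] at hstab
    rw [← hstab, Fintype.card_subtype]
    refine card_le_card_of_injOn (fun g => σ₀ * g) ?_ (fun a _ b _ h => mul_left_cancel h)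
    intro g hg
    have hg' : ω ∘ g = ω := by simpa using hg
    have hc : ω₀ ∘ (σ₀ * g : Equiv.Perm (Fin n)) = ω := by
      rw [← hg']
      funext a
      exact hσ₀ (g a)
    simp only [mem_coe, mem_filter, mem_univ, true_and, hc]
    exact ⟨hω', trivial⟩
  have hmul := mul_card_image_le_card_of_maps_to (f := fun σ : Equiv.Perm (Fin n) => ω₀ ∘ σ)
    (fun σ hσ => (mem_filter.1 hσ).2) _ key
  rw [mul_comm]
  refine hmul.trans ((card_le_univ _).trans_eq ?_)
  rw [Fintype.card_perm, Fintype.card_fin]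

open Finset in
lemma sum_inv_factorial_le (k : ℕ) :
    ∑ j ∈ range k, ((j.factorial : ℝ))⁻¹ ≤ Real.exp 1 - ((k.factorial : ℝ))⁻¹ := by
  have := Real.sum_le_exp_of_nonneg (x := 1) zero_le_one (k + 1)
  rw [sum_range_succ] at this
  simp only [one_pow, one_div] at this
  linarith

lemma factorial_le_sqrt_mul (n : ℕ) (hn : 1 ≤ n) :
    (n.factorial : ℝ) ≤ Real.exp 1 * √n * (n / Real.exp 1) ^ n := by
  obtain ⟨m, rfl⟩ := Nat.exists_eq_add_of_le' hn
  have h := Stirling.stirlingSeq'_antitone (Nat.zero_le m)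
  simp only [Function.comp, Nat.succ_eq_add_one, zero_add, Stirling.stirlingSeq_one] at h
  rw [Stirling.stirlingSeq, div_le_div_iff₀ (by positivity) (by positivity),
    Real.sqrt_mul (by norm_num)] at h
  have h2 : (0:ℝ) < √2 := by positivity
  refine le_of_mul_le_mul_right ?_ h2
  linarith

open Finset in
/-- Poissonization: the number of outcomes with all loads below `k` is at most
`n! (∑ j < k, 1/j!)^n`. -/
lemma card_load_lt_le (n k : ℕ) :
    ((univ.filter fun ω : Fin n → Fin n => ∀ v, load ω v < k).card : ℝ)
      ≤ n.factorial * (∑ j ∈ range k, ((j.factorial : ℝ))⁻¹) ^ n := by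
  have h := card_eq_sum_card_fiberwise
    (s := univ.filter fun ω : Fin n → Fin n => ∀ v, load ω v < k)
    (t := Fintype.piFinset fun _ : Fin n => range k) (f := load)
    (by intro ω hω; simpa using hω)
  have hpow : (∑ j ∈ range k, ((j.factorial : ℝ))⁻¹) ^ n
      = ∑ l ∈ Fintype.piFinset fun _ : Fin n => range k, ∏ v, (((l v).factorial : ℝ))⁻¹ := by
    rw [← prod_univ_sum (fun _ : Fin n => range k) (fun _ j => ((j.factorial : ℝ))⁻¹)]; simp
  rw [h, hpow, mul_sum]
  push_cast
  refine sum_le_sum fun l _ => ?_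
  have h1 := card_load_eq_mul_le l
  have hpos : (0:ℝ) < ∏ v, ((l v).factorial : ℝ) := prod_pos fun v _ => by positivity
  rw [prod_inv_distrib, ← div_eq_mul_inv, le_div_iff₀ hpos]
  have h1' : ((univ.filter fun ω : Fin n → Fin n => load ω = l).card : ℝ)
      * ∏ v, ((l v).factorial : ℝ) ≤ n.factorial := by exact_mod_cast h1
  refine le_trans (mul_le_mul_of_nonneg_right ?_ hpos.le) h1'
  exact_mod_cast card_le_card (by intro ω; simp)

open Finset in
/-- Lower tail: since `∑ j < k, 1/j! ≤ e - 1/k!`, Stirling's bound turns `card_load_lt_le` into a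
probability of order `√n · (1 - 1/(e k!))^n`, which is tiny as long as `k! ≤ √n`. -/
lemma lower_tail (n k : ℕ) (hn : 1 ≤ n) (hk : (k.factorial : ℝ) ≤ √n) :
    ((univ.filter fun ω : Fin n → Fin n => ∀ v, load ω v < k).card : ℝ)
      ≤ (n:ℝ) ^ n * (Real.exp 1 * √n * Real.exp (-(√n / Real.exp 1))) := by
  have hn0 : (0:ℝ) < n := by exact_mod_cast hn
  have hk0 : (0:ℝ) < k.factorial := by positivity
  have he : (0:ℝ) < Real.exp 1 := Real.exp_pos 1
  have hT0 : 0 ≤ ∑ j ∈ range k, ((j.factorial : ℝ))⁻¹ := sum_nonneg fun j _ => by positivity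
  have hT : (∑ j ∈ range k, ((j.factorial : ℝ))⁻¹)
      ≤ Real.exp 1 * Real.exp (-((√n)⁻¹ / Real.exp 1)) := by
    have h1 : (√n)⁻¹ ≤ ((k.factorial : ℝ))⁻¹ := inv_anti₀ hk0 hk
    have h2 := Real.add_one_le_exp (-((√n)⁻¹ / Real.exp 1))
    have h3 := mul_le_mul_of_nonneg_left h2 he.le
    have h4 : Real.exp 1 * (-((√n)⁻¹ / Real.exp 1) + 1) = Real.exp 1 - (√n)⁻¹ := by
      field_simp; ring
    linarith [sum_inv_factorial_le k]
  calc _ ≤ _ := card_load_lt_le n k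
    _ ≤ (Real.exp 1 * √n * (n / Real.exp 1) ^ n)
        * (Real.exp 1 * Real.exp (-((√n)⁻¹ / Real.exp 1))) ^ n :=
      mul_le_mul (factorial_le_sqrt_mul n hn) (pow_le_pow_left₀ hT0 hT n) (by positivity)
        (by positivity)
    _ = _ := by
      have h5 : Real.exp (-((√n)⁻¹ / Real.exp 1)) ^ n = Real.exp (-(√n / Real.exp 1)) := by
        rw [← Real.exp_nat_mul]
        congr 1
        have : (n:ℝ) = √n * √n := (Real.mul_self_sqrt hn0.le).symm
        have hs : √(n:ℝ) ≠ 0 := by positivity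
        nth_rewrite 1 [this]
        field_simp
      rw [mul_pow, h5, div_pow]
      field_simp

/-! ### Upper tail by a Chernoff bound -/

open Finset in
/-- Exponential moment of the load of one bin: `z ^ load` is a product of independent factors,
one per ball. -/
lemma sum_pow_load {n : ℕ} (hn : 1 ≤ n) (v : Fin n) (z : ℝ) :
    ∑ ω : Fin n → Fin n, z ^ load ω v = (n - 1 + z) ^ n := by
  have h : ∀ ω : Fin n → Fin n, z ^ load ω v = ∏ b, if ω b = v then z else 1 := by
    intro ω
    rw [prod_ite]; simp [load]
  simp_rw [h]
  have h2 := prod_univ_sum (fun _ : Fin n => (univ : Finset (Fin n)))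
    (fun _ w => if w = v then z else (1:ℝ))
  rw [Fintype.piFinset_univ] at h2
  rw [← h2, prod_const, sum_ite]
  have : (univ.filter fun x : Fin n => ¬ x = v).card = n - 1 := by
    rw [filter_not, filter_eq' univ v]; simp [card_sdiff]
  simp [this, filter_eq', Nat.cast_sub hn]
  ring

open Finset in
/-- Chernoff bound for one bin, with the exponential moment taken at the base `z`. -/
lemma upper_tail_bin {n : ℕ} (hn : 1 ≤ n) (v : Fin n) (z : ℝ) (hz : 1 ≤ z) :
    ((univ.filter fun ω : Fin n → Fin n => z < load ω v).card : ℝ)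
      ≤ (n:ℝ) ^ n * Real.exp (z - z * Real.log z) := by
  have hn0 : (0:ℝ) < n := by exact_mod_cast hn
  have hz0 : 0 < z := by linarith
  have h1 : ((univ.filter fun ω : Fin n → Fin n => z < load ω v).card : ℝ)
      * Real.exp (z * Real.log z) ≤ (n - 1 + z) ^ n := by
    rw [← sum_pow_load hn v z, ← nsmul_eq_mul]
    refine le_trans (card_nsmul_le_sum _ (fun ω => z ^ load ω v) _ ?_)
      (sum_le_sum_of_subset_of_nonneg (subset_univ _) fun _ _ _ => by positivity)
    intro ω hω
    have hω' : z < load ω v := (mem_filter.1 hω).2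
    rw [← Real.rpow_natCast, Real.rpow_def_of_pos hz0, Real.exp_le_exp, mul_comm]
    exact mul_le_mul_of_nonneg_left hω'.le (Real.log_nonneg hz)
  have h2 : ((n:ℝ) - 1 + z) ^ n ≤ (n:ℝ) ^ n * Real.exp z := by
    have h3 : (n:ℝ) - 1 + z ≤ n * Real.exp (z / n) := by
      have := mul_le_mul_of_nonneg_left (Real.add_one_le_exp (z / n)) hn0.le
      have h4 : (n:ℝ) * (z / n + 1) = n + z := by field_simp; ring
      linarith
    have h5 : (1:ℝ) ≤ n := by exact_mod_cast hn
    refine (pow_le_pow_left₀ (by linarith) h3 n).trans_eq ?_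
    rw [mul_pow, ← Real.exp_nat_mul]
    congr 2
    field_simp
  rw [Real.exp_sub, ← mul_div_assoc, le_div_iff₀ (Real.exp_pos _)]
  linarith

open Finset in
/-- Union bound over the bins. -/
lemma upper_tail {n : ℕ} (hn : 1 ≤ n) (z : ℝ) (hz : 1 ≤ z) :
    ((univ.filter fun ω : Fin n → Fin n => z < maxLoad ω).card : ℝ)
      ≤ (n:ℝ) ^ n * (n * Real.exp (z - z * Real.log z)) := by
  have hsub : (univ.filter fun ω : Fin n → Fin n => z < maxLoad ω) ⊆
      univ.biUnion fun v => univ.filter fun ω : Fin n → Fin n => z < load ω v := by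
    intro ω hω
    have hω' : z < maxLoad ω := (mem_filter.1 hω).2
    have : Nonempty (Fin n) := ⟨⟨0, hn⟩⟩
    obtain ⟨v, -, hv⟩ := exists_mem_eq_sup (univ : Finset (Fin n)) univ_nonempty (load ω)
    simp only [mem_biUnion, mem_univ, true_and, mem_filter]
    refine ⟨v, ?_⟩
    rwa [← hv]
  calc _ ≤ ((∑ v : Fin n, (univ.filter fun ω : Fin n → Fin n => z < load ω v).card : ℕ) : ℝ) := by
        exact_mod_cast (card_le_card hsub).trans card_biUnion_le
    _ ≤ ∑ v : Fin n, (n:ℝ) ^ n * Real.exp (z - z * Real.log z) := by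
        push_cast
        exact sum_le_sum fun v _ => upper_tail_bin hn v z hz
    _ = _ := by simp; ring

/-! ### Asymptotics of the two tails at `log n / log log n` -/

open Real Filter Topology in
/-- Growth estimates, with `x = log n` and `y = log log n`. -/
lemma eventually_growth : ∀ᶠ n : ℕ in atTop,
    1 ≤ n ∧ 1 ≤ log (log n) ∧ 4 * log (log n) ≤ log n ∧ 8 ≤ log n := by
  have hx : Tendsto (fun n : ℕ => log (n:ℝ)) atTop atTop :=
    tendsto_log_atTop.comp tendsto_natCast_atTop_atTop
  have hy := tendsto_log_atTop.comp hx
  have ho : ∀ᶠ x : ℝ in atTop, ‖log x‖ ≤ (1/4) * ‖x‖ :=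
    isLittleO_log_id_atTop.bound (by norm_num)
  filter_upwards [eventually_ge_atTop 1, hy.eventually_ge_atTop 1, hx.eventually ho,
    hx.eventually_ge_atTop 8] with n h1 h2 h3 h4
  refine ⟨h1, h2, ?_, h4⟩
  simp only [Function.comp] at h2
  rw [norm_of_nonneg (by linarith), norm_of_nonneg (by linarith)] at h3
  linarith

open Real in
/-- The threshold `k = ⌈log n / (4 log log n)⌉` satisfies `k! ≤ √n`, via `k! ≤ k ^ k ≤ (log n) ^ k`
and `k log log n ≤ (log n)/4 + log log n`. -/
lemma factorial_ceil_le_sqrt {n : ℕ} (h1 : 1 ≤ n) (h2 : 1 ≤ log (log n))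
    (h3 : 4 * log (log n) ≤ log n) (h4 : 8 ≤ log n) :
    ((⌈1 / 4 * (log n / log (log n))⌉₊.factorial : ℝ)) ≤ √n := by
  have hn0 : (0:ℝ) < n := by exact_mod_cast h1
  set x := log (n:ℝ) with hx
  set y := log x with hy
  have hL : 0 ≤ 1 / 4 * (x / y) := by positivity
  set k := ⌈1 / 4 * (x / y)⌉₊ with hk
  have hk1 : (k:ℝ) ≤ 1 / 4 * (x / y) + 1 := (Nat.ceil_lt_add_one hL).le
  have hkx : (k:ℝ) ≤ x := by
    have : x / y ≤ x := div_le_self (by linarith) h2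
    linarith
  have hxk : (k.factorial : ℝ) ≤ x ^ k := by
    calc (k.factorial : ℝ) ≤ (k:ℝ) ^ k := by exact_mod_cast Nat.factorial_le_pow k
      _ ≤ x ^ k := pow_le_pow_left₀ (by positivity) hkx k
  refine hxk.trans ?_
  have hx0 : 0 < x := by linarith
  rw [← log_le_log_iff (by positivity) (by positivity), log_pow, log_sqrt hn0.le, ← hx, ← hy]
  have : (k:ℝ) * y ≤ (1 / 4 * (x / y) + 1) * y := mul_le_mul_of_nonneg_right hk1 (by linarith)
  have e : (1 / 4 * (x / y) + 1) * y = x / 4 + y := by field_simp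
  linarith

open Real in
/-- At `z = 4 log n / log log n` the upper tail bound is at most `1/n`: here
`log z ≥ 1 + (log log n)/2`, so `z log z - z ≥ 2 log n`. -/
lemma upper_exponent_le {n : ℕ} (h1 : 1 ≤ n) (h2 : 1 ≤ log (log n))
    (h4 : 8 ≤ log n) :
    1 ≤ 4 * (log n / log (log n)) ∧
    n * exp (4 * (log n / log (log n)) -
      4 * (log n / log (log n)) * log (4 * (log n / log (log n)))) ≤ (n:ℝ)⁻¹ := by
  have hn0 : (0:ℝ) < n := by exact_mod_cast h1
  set x := log (n:ℝ) with hx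
  set y := log x with hy
  have hx0 : 0 < x := by linarith
  have hy0 : 0 < y := by linarith
  have hyx : y ≤ x := by have := log_le_sub_one_of_pos hx0; linarith
  have hL : 1 ≤ x / y := (one_le_div hy0).2 hyx
  refine ⟨by linarith, ?_⟩
  have hlog4 : 1 ≤ log 4 := by
    rw [le_log_iff_exp_le (by norm_num)]; linarith [exp_one_lt_d9]
  have hlogy : log y ≤ y / 2 := by
    have a := log_le_sub_one_of_pos (show 0 < y / 2 by linarith)
    rw [log_div hy0.ne' (by norm_num)] at a
    have := log_two_lt_d9
    linarith
  have hlog : 1 + y / 2 ≤ log (4 * (x / y)) := by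
    rw [log_mul (by norm_num) (by positivity), log_div hx0.ne' hy0.ne', ← hy]
    linarith
  have h5 : 4 * (x / y) * (1 + y / 2) ≤ 4 * (x / y) * log (4 * (x / y)) :=
    mul_le_mul_of_nonneg_left hlog (by positivity)
  have e : 4 * (x / y) * (1 + y / 2) = 4 * (x / y) + 2 * x := by field_simp; ring
  have h6 : exp (4 * (x / y) - 4 * (x / y) * log (4 * (x / y))) ≤ exp (-x + -x) :=
    exp_le_exp.2 (by linarith)
  have h7 : exp (-x) = (n:ℝ)⁻¹ := by rw [exp_neg, hx, exp_log hn0]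
  rw [exp_add, h7] at h6
  calc _ ≤ (n:ℝ) * ((n:ℝ)⁻¹ * (n:ℝ)⁻¹) := mul_le_mul_of_nonneg_left h6 hn0.le
    _ = _ := by field_simp

open Real Filter Topology in
lemma tendsto_error :
    Tendsto (fun n : ℕ => exp 1 * √n * exp (-(√n / exp 1)) + (n:ℝ)⁻¹) atTop (𝓝 0) := by
  have hu : Tendsto (fun n : ℕ => √(n:ℝ) / exp 1) atTop atTop :=
    (tendsto_sqrt_atTop.comp tendsto_natCast_atTop_atTop).atTop_div_const (exp_pos 1)
  have h := ((tendsto_pow_mul_exp_neg_atTop_nhds_zero 1).comp hu).const_mul (exp 1 * exp 1)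
  have h2 := h.add (tendsto_inv_atTop_nhds_zero_nat (𝕜 := ℝ))
  simp only [mul_zero, add_zero] at h2
  refine h2.congr fun n => ?_
  simp only [Function.comp, pow_one]
  field_simp

open Real Finset in
/-- The two tails together bound the probability of a maximum load outside
`[L/4, 4L]`, where `L = log n / log log n`. -/
lemma good_prob_ge {n : ℕ} (h1 : 1 ≤ n) (h2 : 1 ≤ log (log n))
    (h3 : 4 * log (log n) ≤ log n) (h4 : 8 ≤ log n) :
    1 - (exp 1 * √n * exp (-(√n / exp 1)) + (n:ℝ)⁻¹) ≤
      ((univ.filter fun ω : Fin n → Fin n =>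
            1 / 4 * (log n / log (log n)) ≤ (maxLoad ω : ℝ) ∧
            (maxLoad ω : ℝ) ≤ 4 * (log n / log (log n))).card : ℝ) / (n : ℝ) ^ n := by
  classical
  have hn0 : (0:ℝ) < n := by exact_mod_cast h1
  obtain ⟨hz, hup⟩ := upper_exponent_le h1 h2 h4
  have hlow := lower_tail n _ h1 (factorial_ceil_le_sqrt h1 h2 h3 h4)
  have hupp := upper_tail h1 _ hz
  set L := log (n:ℝ) / log (log n)
  have hcover : (univ : Finset (Fin n → Fin n)) ⊆
      (univ.filter fun ω : Fin n → Fin n =>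
        1 / 4 * L ≤ (maxLoad ω : ℝ) ∧ (maxLoad ω : ℝ) ≤ 4 * L) ∪
      ((univ.filter fun ω : Fin n → Fin n => ∀ v, load ω v < ⌈1 / 4 * L⌉₊) ∪
        (univ.filter fun ω : Fin n → Fin n => 4 * L < maxLoad ω)) := by
    intro ω _
    simp only [mem_union, mem_filter, mem_univ, true_and]
    by_cases ha : 4 * L < maxLoad ω
    · exact Or.inr (Or.inr ha)
    by_cases hb : 1 / 4 * L ≤ (maxLoad ω : ℝ)
    · exact Or.inl ⟨hb, not_lt.1 ha⟩
    refine Or.inr (Or.inl fun v => ?_)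
    rw [Nat.lt_ceil]
    have : load ω v ≤ maxLoad ω := le_sup (f := load ω) (mem_univ v)
    have : (load ω v : ℝ) ≤ maxLoad ω := by exact_mod_cast this
    linarith
  have hc := (card_le_card hcover).trans
    ((card_union_le _ _).trans (Nat.add_le_add_left (card_union_le _ _) _))
  have hc' := (Nat.cast_le (α := ℝ)).2 hc
  simp only [card_univ, Fintype.card_fun, Fintype.card_fin, Nat.cast_pow, Nat.cast_add] at hc'
  have hp : (0:ℝ) < (n:ℝ) ^ n := by positivity
  have hup' := mul_le_mul_of_nonneg_left hup hp.le
  rw [le_div_iff₀ hp]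
  nlinarith

open Real in
/-- Single-choice balls and bins: `n` balls thrown independently and uniformly into
`n` bins.  With high probability the maximum load is `Θ(log n / log log n)`, and the
expected maximum load is at least `k₀ · log n / log log n` for some constant `k₀ > 0`
and all large `n`.  (Outcomes `ω : Fin n → Fin n` are uniform, so probabilities and
expectations are normalized counts/sums over all `n^n` outcomes.) -/
theorem balls_in_bins_single_choice_max_load :
    ∃ c₁ > (0:ℝ), ∃ c₂ > (0:ℝ), ∃ k₀ > (0:ℝ),
      (∀ ε > (0:ℝ), ∃ N : ℕ, ∀ n ≥ N,
        ((Nat.card {ω : Fin n → Fin n //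
            c₁ * (log n / log (log n)) ≤ (maxLoad ω : ℝ) ∧
            (maxLoad ω : ℝ) ≤ c₂ * (log n / log (log n))} : ℝ) / (n : ℝ) ^ n)
          ≥ 1 - ε) ∧
      ∃ N : ℕ, ∀ n ≥ N,
        (∑ ω : Fin n → Fin n, (maxLoad ω : ℝ)) / (n : ℝ) ^ n ≥
          k₀ * (log n / log (log n)) := by
  have hev : ∀ ε > (0:ℝ), ∃ N : ℕ, ∀ n ≥ N,
      0 ≤ 1 / 4 * (log n / log (log n)) ∧
      ((Finset.univ.filter fun ω : Fin n → Fin n =>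
            1 / 4 * (log n / log (log n)) ≤ (maxLoad ω : ℝ) ∧
            (maxLoad ω : ℝ) ≤ 4 * (log n / log (log n))).card : ℝ) / (n : ℝ) ^ n ≥ 1 - ε := by
    intro ε hε
    refine Filter.eventually_atTop.1 ?_
    filter_upwards [eventually_growth, tendsto_error.eventually (gt_mem_nhds hε)]
      with n ⟨h1, h2, h3, h4⟩ h5
    exact ⟨by positivity, by linarith [good_prob_ge h1 h2 h3 h4]⟩
  refine ⟨1 / 4, by norm_num, 4, by norm_num, 1 / 8, by norm_num, ?_, ?_⟩
  · intro ε hε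
    obtain ⟨N, hN⟩ := hev ε hε
    refine ⟨N, fun n hn => ?_⟩
    rw [Nat.subtype_card (Finset.univ.filter fun ω : Fin n → Fin n =>
            1 / 4 * (log n / log (log n)) ≤ (maxLoad ω : ℝ) ∧
            (maxLoad ω : ℝ) ≤ 4 * (log n / log (log n))) (by simp)]
    exact (hN n hn).2
  · obtain ⟨N, hN⟩ := hev (1 / 2) (by norm_num)
    refine ⟨N, fun n hn => ?_⟩
    obtain ⟨hL, h⟩ := hN n hn
    -- Markov: outcomes of maximum load at least `L/4` (`L = log n / log log n`) have total
    -- probability at least `1/2`, hence the constant `1/8`.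
    have hM : ((Finset.univ.filter fun ω : Fin n → Fin n =>
            1 / 4 * (log n / log (log n)) ≤ (maxLoad ω : ℝ) ∧
            (maxLoad ω : ℝ) ≤ 4 * (log n / log (log n))).card : ℝ) *
          (1 / 4 * (log n / log (log n))) ≤ ∑ ω : Fin n → Fin n, (maxLoad ω : ℝ) := by
      rw [← nsmul_eq_mul]
      refine le_trans (Finset.card_nsmul_le_sum _ (fun ω => (maxLoad ω : ℝ)) _ fun ω hω =>
        (Finset.mem_filter.1 hω).2.1) ?_
      exact Finset.sum_le_sum_of_subset_of_nonneg (Finset.subset_univ _)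
        fun _ _ _ => Nat.cast_nonneg _
    have hD := div_le_div_of_nonneg_right hM (show (0:ℝ) ≤ (n:ℝ) ^ n by positivity)
    rw [mul_div_right_comm] at hD
    have := mul_le_mul_of_nonneg_right h hL
    linarith
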